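/- Let n ≥ 2, let γ and θ be real symmetric n×n matrices, and let ℓ ∈ ℝⁿ be a nonzero vector with γℓ = 0 and θℓ = 0. Suppose λ₁, λ₂ are nonzero real numbers and b₁, b₂ ∈ ℝⁿ are vectors such that G₁ = λ₁γ − b₁b₁ᵀ and G₂ = λ₂γ − b₂b₂ᵀ are both invertible. Then λ₁ · tr(G₁⁻¹ θ) = λ₂ · tr(G₂⁻¹ θ). -/

import Mathlib

open Matrix

/-!
Let `G = λ γ - a bᵀ` be invertible. If `γ ℓ = 0` with `ℓ ≠ 0`, then `G ℓ = -(b ⬝ ℓ) a`, so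
`b ⬝ ℓ ≠ 0` and `G⁻¹ a` is proportional to `ℓ`; dually `bᵀ G⁻¹` is proportional to a left null
vector of `γ`. In `λ₁ G₁⁻¹ - λ₂ G₂⁻¹ = G₁⁻¹ (λ₁ G₂ - λ₂ G₁) G₂⁻¹` the middle factor does not
involve `γ`, so the difference is a combination of `(G₁⁻¹ a₁) (b₁ᵀ G₂⁻¹)` and
`(G₁⁻¹ a₂) (b₂ᵀ G₂⁻¹)`. Against `θ`, the trace of the first vanishes because `θ G₁⁻¹ a₁ = 0`, and
that of the second because `b₂ᵀ G₂⁻¹ θ = 0`.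
-/

section RankOneUpdate

variable {m n R : Type*} [Fintype n] [CommRing R]

lemma sub_vecMulVec_mulVec_of_mulVec_eq_zero {M : Matrix m n R} {v : n → R} (hMv : M *ᵥ v = 0)
    (a : m → R) (b : n → R) : (M - vecMulVec a b) *ᵥ v = -((b ⬝ᵥ v) • a) := by
  rw [sub_mulVec, hMv, vecMulVec_mulVec, op_smul_eq_smul, zero_sub]

lemma trace_vecMulVec_mul (x y : n → R) (N : Matrix n n R) :
    trace (vecMulVec x y * N) = y ⬝ᵥ N *ᵥ x := by
  rw [vecMulVec_mul, trace_vecMulVec, dotProduct_comm, dotProduct_mulVec]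

variable [DecidableEq n]

lemma dotProduct_ne_zero_of_isUnit_sub_vecMulVec {M : Matrix n n R} {v a b : n → R} (hv : v ≠ 0)
    (hMv : M *ᵥ v = 0) (hG : IsUnit (M - vecMulVec a b)) : b ⬝ᵥ v ≠ 0 := by
  intro hbv
  refine hv (mulVec_injective_of_isUnit hG ?_)
  rw [sub_vecMulVec_mulVec_of_mulVec_eq_zero hMv, hbv, zero_smul, neg_zero, mulVec_zero]

lemma dotProduct_smul_inv_sub_vecMulVec_mulVec {M : Matrix n n R} {v a b : n → R}
    (hMv : M *ᵥ v = 0) (hG : IsUnit (M - vecMulVec a b)) :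
    (b ⬝ᵥ v) • (M - vecMulVec a b)⁻¹ *ᵥ a = -v := by
  rw [← mulVec_smul, ← neg_eq_iff_eq_neg, ← mulVec_neg,
    ← sub_vecMulVec_mulVec_of_mulVec_eq_zero hMv, mulVec_mulVec,
    nonsing_inv_mul _ ((isUnit_iff_isUnit_det _).1 hG), one_mulVec]

lemma mulVec_inv_sub_vecMulVec_mulVec_eq_zero [NoZeroDivisors R] {M : Matrix n n R}
    {N : Matrix m n R} {v a b : n → R} (hv : v ≠ 0) (hMv : M *ᵥ v = 0) (hNv : N *ᵥ v = 0)
    (hG : IsUnit (M - vecMulVec a b)) : N *ᵥ (M - vecMulVec a b)⁻¹ *ᵥ a = 0 := by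
  have hbv : b ⬝ᵥ v ≠ 0 := dotProduct_ne_zero_of_isUnit_sub_vecMulVec hv hMv hG
  refine (smul_eq_zero_iff_right hbv).1 ?_
  rw [← mulVec_smul, dotProduct_smul_inv_sub_vecMulVec_mulVec hMv hG, mulVec_neg, hNv, neg_zero]

lemma vecMul_inv_sub_vecMulVec_vecMul_eq_zero [NoZeroDivisors R] {M : Matrix n n R}
    {N : Matrix n m R} {v a b : n → R} (hv : v ≠ 0) (hvM : v ᵥ* M = 0) (hvN : v ᵥ* N = 0)
    (hG : IsUnit (M - vecMulVec a b)) : (b ᵥ* (M - vecMulVec a b)⁻¹) ᵥ* N = 0 := by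
  have hGT : (M - vecMulVec a b)ᵀ = Mᵀ - vecMulVec b a := by
    rw [transpose_sub, transpose_vecMulVec]
  rw [← mulVec_transpose] at hvM hvN
  rw [← isUnit_transpose, hGT] at hG
  rw [← mulVec_transpose, ← mulVec_transpose, transpose_nonsing_inv, hGT]
  exact mulVec_inv_sub_vecMulVec_mulVec_eq_zero hv hvM hvN hG

lemma smul_inv_sub_smul_inv {A B : Matrix n n R} (hA : IsUnit A) (hB : IsUnit B) (c d : R) :
    c • A⁻¹ - d • B⁻¹ = A⁻¹ * (c • B - d • A) * B⁻¹ := by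
  rw [isUnit_iff_isUnit_det] at hA hB
  rw [mul_sub, sub_mul, Matrix.mul_smul, Matrix.mul_smul, smul_mul, smul_mul,
    mul_nonsing_inv_cancel_right _ _ hB, nonsing_inv_mul _ hA, one_mul]

lemma smul_inv_sub_smul_inv_of_smul_sub_vecMulVec {M G₁ G₂ : Matrix n n R} {c₁ c₂ : R}
    {a₁ b₁ a₂ b₂ : n → R} (hG₁ : IsUnit G₁) (hG₂ : IsUnit G₂)
    (h₁ : G₁ = c₁ • M - vecMulVec a₁ b₁) (h₂ : G₂ = c₂ • M - vecMulVec a₂ b₂) :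
    c₁ • G₁⁻¹ - c₂ • G₂⁻¹ = c₂ • vecMulVec (G₁⁻¹ *ᵥ a₁) (b₁ ᵥ* G₂⁻¹)
      - c₁ • vecMulVec (G₁⁻¹ *ᵥ a₂) (b₂ ᵥ* G₂⁻¹) := by
  have hmiddle : c₁ • G₂ - c₂ • G₁ = c₂ • vecMulVec a₁ b₁ - c₁ • vecMulVec a₂ b₂ := by
    rw [h₁, h₂, smul_sub, smul_sub, smul_comm c₁ c₂ M]
    abel
  rw [smul_inv_sub_smul_inv hG₁ hG₂, hmiddle]
  simp only [mul_sub, sub_mul, Matrix.mul_smul, smul_mul, mul_vecMulVec, vecMulVec_mul]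

end RankOneUpdate

theorem stmt_11_general {n R : Type*} [Fintype n] [DecidableEq n] [CommRing R] [NoZeroDivisors R]
    {γ θ : Matrix n n R} {k ℓ : n → R} (hk : k ≠ 0) (hℓ : ℓ ≠ 0)
    (hkγ : k ᵥ* γ = 0) (hγℓ : γ *ᵥ ℓ = 0) (hkθ : k ᵥ* θ = 0) (hθℓ : θ *ᵥ ℓ = 0)
    {lam₁ lam₂ : R} {a₁ b₁ a₂ b₂ : n → R}
    (hG₁ : IsUnit (lam₁ • γ - vecMulVec a₁ b₁)) (hG₂ : IsUnit (lam₂ • γ - vecMulVec a₂ b₂)) :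
    lam₁ * trace ((lam₁ • γ - vecMulVec a₁ b₁)⁻¹ * θ)
      = lam₂ * trace ((lam₂ • γ - vecMulVec a₂ b₂)⁻¹ * θ) := by
  have hright : θ *ᵥ (lam₁ • γ - vecMulVec a₁ b₁)⁻¹ *ᵥ a₁ = 0 :=
    mulVec_inv_sub_vecMulVec_mulVec_eq_zero hℓ (by rw [smul_mulVec, hγℓ, smul_zero]) hθℓ hG₁
  have hleft : (b₂ ᵥ* (lam₂ • γ - vecMulVec a₂ b₂)⁻¹) ᵥ* θ = 0 :=
    vecMul_inv_sub_vecMulVec_vecMul_eq_zero hk (by rw [vecMul_smul, hkγ, smul_zero]) hkθ hG₂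
  have hdiff := smul_inv_sub_smul_inv_of_smul_sub_vecMulVec hG₁ hG₂ rfl rfl
  generalize (lam₁ • γ - vecMulVec a₁ b₁)⁻¹ = P₁ at *
  generalize (lam₂ • γ - vecMulVec a₂ b₂)⁻¹ = P₂ at *
  rw [← sub_eq_zero]
  calc lam₁ * trace (P₁ * θ) - lam₂ * trace (P₂ * θ)
      = trace ((lam₁ • P₁ - lam₂ • P₂) * θ) := by
        simp only [sub_mul, smul_mul, trace_sub, trace_smul, smul_eq_mul]
    _ = lam₂ * ((b₁ ᵥ* P₂) ⬝ᵥ θ *ᵥ P₁ *ᵥ a₁) - lam₁ * ((b₂ ᵥ* P₂) ⬝ᵥ θ *ᵥ P₁ *ᵥ a₂) := by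
        simp only [hdiff, sub_mul, smul_mul, trace_sub, trace_smul, smul_eq_mul,
          trace_vecMulVec_mul]
    _ = 0 := by
        rw [hright, dotProduct_mulVec _ θ, hleft, dotProduct_zero, zero_dotProduct, mul_zero,
          mul_zero, sub_zero]

/-- The expansion coefficient `θ = λ tr(G⁻¹ θ)` defined via an auxiliary matrix
`G = λγ − b bᵀ` (with `γℓ = 0`, `θℓ = 0`) is independent of the choice of `λ` and `b`. -/
theorem stmt_11 (n : ℕ) (hn : 2 ≤ n)
    (γ θ : Matrix (Fin n) (Fin n) ℝ) (hγ : γ.IsSymm) (hθ : θ.IsSymm)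
    (ℓ : Fin n → ℝ) (hℓ : ℓ ≠ 0) (hγℓ : γ.mulVec ℓ = 0) (hθℓ : θ.mulVec ℓ = 0)
    (lam₁ lam₂ : ℝ) (h₁ : lam₁ ≠ 0) (h₂ : lam₂ ≠ 0)
    (b₁ b₂ : Fin n → ℝ)
    (hG₁ : IsUnit (lam₁ • γ - vecMulVec b₁ b₁))
    (hG₂ : IsUnit (lam₂ • γ - vecMulVec b₂ b₂)) :
    lam₁ * Matrix.trace ((lam₁ • γ - vecMulVec b₁ b₁)⁻¹ * θ)
      = lam₂ * Matrix.trace ((lam₂ • γ - vecMulVec b₂ b₂)⁻¹ * θ) := by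
  have hℓ_left {M : Matrix (Fin n) (Fin n) ℝ} (hM : M.IsSymm) (hMℓ : M *ᵥ ℓ = 0) :
      ℓ ᵥ* M = 0 := by
    rw [← mulVec_transpose, hM.eq, hMℓ]
  exact stmt_11_general hℓ hℓ (hℓ_left hγ hγℓ) hγℓ (hℓ_left hθ hθℓ) hθℓ hG₁ hG₂
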